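/- The simplicial complex C_3 obtained by gluing 3 disjoint copies of X̄ along A is constructible. -/

import Mathlib

/-- Constructibility of a pure `d`-dimensional simplicial complex (represented as the
finset of its faces), defined recursively: a simplex (the full powerset of its vertex
set) is constructible, and the union of two constructible `d`-dimensional complexes
whose intersection is constructible of dimension `d - 1` is constructible.  Dimensions
are integers so as to allow the `(-1)`-dimensional complex `{∅}`. -/
inductive Constructible {V : Type*} [DecidableEq V] : Finset (Finset V) → ℤ → Prop
  | simplex (F : Finset V) : Constructible F.powerset ((F.card : ℤ) - 1)
  | union {Δ₁ Δ₂ : Finset (Finset V)} {d : ℤ} :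
      Constructible Δ₁ d → Constructible Δ₂ d → Constructible (Δ₁ ∩ Δ₂) (d - 1) →
      Constructible (Δ₁ ∪ Δ₂) d

/-- The simplicial complex generated by a list of facets. -/
def gen (L : List (Finset ℕ)) : Finset (Finset ℕ) :=
  L.toFinset.biUnion Finset.powerset

/-- The simplicial complex `X̄` on vertices `{0,…,9}` with fourteen facets. -/
def Xbar : Finset (Finset ℕ) :=
  gen [{1,2,4,9},{1,2,6,9},{1,5,6,9},{1,5,8,9},{1,4,8,9},{1,4,5,8},{1,4,5,7},
       {4,5,7,8},{1,2,5,6},{0,1,2,5},{0,2,5,6},{0,1,2,3},{1,2,3,4},{1,3,4,7}]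

/-- The map on vertices defining the `i`-th copy of `X̄` in the glued complex `C_N`:
vertices of `A` (i.e. those in `{0,2,3,4,6,7,8}`) are fixed, and each vertex
`v ∈ {1,5,9}` is sent to `(i, v)`. -/
def glueVertex (i : ℕ) (v : ℕ) : ℕ ⊕ (ℕ × ℕ) :=
  if v = 1 ∨ v = 5 ∨ v = 9 then Sum.inr (i, v) else Sum.inl v

/-- The image `φ_i(σ)` of a face `σ` of `X̄` in the `i`-th copy of `X̄`. -/
def phi (i : ℕ) (σ : Finset ℕ) : Finset (ℕ ⊕ (ℕ × ℕ)) :=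
  σ.image (glueVertex i)

/-- The simplicial complex `C_N` obtained by gluing `N` disjoint copies of `X̄` along `A`. -/
def C (N : ℕ) : Finset (Finset (ℕ ⊕ (ℕ × ℕ))) :=
  (Finset.Icc 1 N).biUnion (fun i => Xbar.image (phi i))

/-- A nonempty set `S` of codimension-one faces `F \ {v}`, `v ∈ S`, of a simplex `F` generates a
constructible complex. -/
theorem Constructible.biUnion_powerset_erase {V : Type*} [DecidableEq V] {S : Finset V}
    (hS : S.Nonempty) :
    ∀ {F : Finset V}, S ⊆ F →
      Constructible (S.biUnion fun v => (F.erase v).powerset) ((F.card : ℤ) - 2) := by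
  have card_erase : ∀ {F : Finset V} {v : V}, v ∈ F →
      ((F.erase v).card : ℤ) = (F.card : ℤ) - 1 := fun {F v} hv => by
    have := Finset.card_erase_add_one hv
    omega
  induction hS using Finset.Nonempty.cons_induction with
  | singleton a =>
    intro F hF
    have h := Constructible.simplex (F.erase a)
    rw [card_erase (by simpa using hF), sub_sub] at h
    simpa using h
  | cons a S ha hS ih =>
    intro F hF
    rw [Finset.cons_eq_insert, Finset.insert_subset_iff] at hF
    obtain ⟨haF, hSF⟩ := hF
    rw [Finset.cons_eq_insert, Finset.biUnion_insert]
    refine .union ?_ (ih hSF) ?_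
    · have h := Constructible.simplex (F.erase a)
      rwa [card_erase haF, sub_sub] at h
    · have hSa : S ⊆ F.erase a := fun v hv =>
        Finset.mem_erase.2 ⟨fun h => ha (h ▸ hv), hSF hv⟩
      have h := ih hSa
      rw [card_erase haF] at h
      convert h using 1
      · ext σ
        simp only [Finset.mem_inter, Finset.mem_powerset, Finset.mem_biUnion,
          Finset.subset_erase]
        grind
      · ring

/-- Constructibility is preserved by injective relabelling of the vertices. -/
theorem Constructible.image {V W : Type*} [DecidableEq V] [DecidableEq W] {f : V → W}
    (hf : Function.Injective f) {Δ : Finset (Finset V)} {d : ℤ} (h : Constructible Δ d) :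
    Constructible (Δ.image (Finset.image f)) d := by
  induction h with
  | simplex F =>
    have h := Constructible.simplex (F.image f)
    rwa [Finset.card_image_of_injective F hf, Finset.powerset_image] at h
  | union _ _ _ ih₁ ih₂ ih =>
    rw [Finset.image_union]
    rw [Finset.image_inter _ _ (Finset.image_injective hf)] at ih
    exact .union ih₁ ih₂ ih

theorem mem_gen {L : List (Finset ℕ)} {σ : Finset ℕ} : σ ∈ gen L ↔ ∃ G ∈ L, σ ⊆ G := by
  simp [gen]

/-- The list of facets `L`, read from its last entry to its first, is a shelling order. -/
def IsShelling : List (Finset ℕ) → Prop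
  | [] => True
  | F :: L => (∀ G ∈ L, ∃ v ∈ F, v ∉ G ∧ ∃ H ∈ L, F.erase v ⊆ H) ∧ IsShelling L

instance IsShelling.decidable : (L : List (Finset ℕ)) → Decidable (IsShelling L)
  | [] => inferInstanceAs (Decidable True)
  | _ :: L => @instDecidableAnd _ _ _ (IsShelling.decidable L)

/-- Shellable complexes are constructible. -/
theorem IsShelling.constructible {n : ℕ} {L : List (Finset ℕ)} (hL : IsShelling L)
    (hne : L ≠ []) (hcard : ∀ F ∈ L, F.card = n) : Constructible (gen L) ((n : ℤ) - 1) := by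
  induction L with
  | nil => exact absurd rfl hne
  | cons F L ih =>
    obtain ⟨hF, hL⟩ := hL
    have hFcard : F.card = n := hcard F (by simp)
    have hsimplex := Constructible.simplex F
    rw [hFcard] at hsimplex
    have hgen : gen (F :: L) = F.powerset ∪ gen L := by
      ext σ
      simp [mem_gen]
    rw [hgen]
    obtain rfl | hLne := eq_or_ne L []
    · simpa [gen] using hsimplex
    refine .union hsimplex (ih hL hLne fun G hG => hcard G (by simp [hG])) ?_
    have hS : (F.filter fun v => ∃ H ∈ L, F.erase v ⊆ H).Nonempty := by
      obtain ⟨G, hG⟩ := List.exists_mem_of_ne_nil L hLne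
      obtain ⟨v, hv, -, hH⟩ := hF G hG
      exact ⟨v, Finset.mem_filter.2 ⟨hv, hH⟩⟩
    have h := Constructible.biUnion_powerset_erase hS (Finset.filter_subset _ F)
    rw [hFcard] at h
    convert h using 1
    · ext σ
      simp only [Finset.mem_inter, Finset.mem_powerset, mem_gen, Finset.mem_biUnion,
        Finset.mem_filter]
      constructor
      · rintro ⟨hσF, G, hG, hσG⟩
        obtain ⟨v, hv, hvG, hH⟩ := hF G hG
        exact ⟨v, ⟨hv, hH⟩, Finset.subset_erase.2 ⟨hσF, fun h => hvG (hσG h)⟩⟩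
      · rintro ⟨v, ⟨-, H, hH, hvH⟩, hσ⟩
        exact ⟨hσ.trans (Finset.erase_subset v F), H, hH, hσ.trans hvH⟩
    · ring

/-- The subcomplex `A` of `X̄` along which the copies are glued. -/
def gluingComplex : Finset (Finset ℕ) :=
  gen [{0,2,6},{0,2,3},{2,3,4},{3,4,7},{4,7,8}]

theorem gluingComplex_constructible : Constructible gluingComplex 2 :=
  IsShelling.constructible (n := 3) (by decide) (by simp) (by decide)

theorem Xbar_constructible : Constructible Xbar 3 := by
  have hrev : ∀ L : List (Finset ℕ), gen L.reverse = gen L := fun L => by simp [gen]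
  rw [Xbar, ← hrev]
  exact IsShelling.constructible (n := 4) (by decide) (by simp) (by decide)

theorem gluingComplex_subset_Xbar : gluingComplex ⊆ Xbar := by
  have hgen : ∀ {L M : List (Finset ℕ)}, (∀ G ∈ L, ∃ H ∈ M, G ⊆ H) → gen L ⊆ gen M := by
    intro L M h σ hσ
    obtain ⟨G, hG, hσG⟩ := mem_gen.1 hσ
    obtain ⟨H, hH, hGH⟩ := h G hG
    exact mem_gen.2 ⟨H, hH, hσG.trans hGH⟩
  exact hgen (by decide)

/-- `A` is the subcomplex of `X̄` induced on the vertices other than `1`, `5` and `9`. -/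
theorem mem_gluingComplex_iff {σ : Finset ℕ} :
    σ ∈ gluingComplex ↔ σ ∈ Xbar ∧ ∀ v ∈ σ, ¬(v = 1 ∨ v = 5 ∨ v = 9) := by
  have hgen : ∀ {L M : List (Finset ℕ)},
      (∀ G ∈ L, ∃ H ∈ M, ∀ v ∈ G, ¬(v = 1 ∨ v = 5 ∨ v = 9) → v ∈ H) →
      σ ∈ gen L → (∀ v ∈ σ, ¬(v = 1 ∨ v = 5 ∨ v = 9)) → σ ∈ gen M := by
    intro L M h hσ hv
    obtain ⟨G, hG, hσG⟩ := mem_gen.1 hσ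
    obtain ⟨H, hH, hGH⟩ := h G hG
    exact mem_gen.2 ⟨H, hH, fun v hvσ => hGH v (hσG hvσ) (hv v hvσ)⟩
  have hfacet : ∀ G ∈ ([{0,2,6},{0,2,3},{2,3,4},{3,4,7},{4,7,8}] : List (Finset ℕ)),
      ∀ v ∈ G, ¬(v = 1 ∨ v = 5 ∨ v = 9) := by decide
  constructor
  · intro h
    obtain ⟨G, hG, hσG⟩ := mem_gen.1 h
    exact ⟨gluingComplex_subset_Xbar h, fun v hv => hfacet G hG v (hσG hv)⟩
  · rintro ⟨hσ, hv⟩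
    exact hgen (by decide) hσ hv

theorem glueVertex_injective (i : ℕ) : Function.Injective (glueVertex i) := by
  intro v w h
  unfold glueVertex at h
  split_ifs at h <;> simp_all

theorem phi_eq_phi_of_mem_gluingComplex {σ : Finset ℕ} (hσ : σ ∈ gluingComplex) (i j : ℕ) :
    phi i σ = phi j σ :=
  Finset.image_congr fun v hv => by
    simp [glueVertex, (mem_gluingComplex_iff.1 hσ).2 v hv]

/-- Distinct copies of `X̄` meet only in `A`. -/
theorem mem_gluingComplex_of_phi_eq {i j : ℕ} (hij : i ≠ j) {σ τ : Finset ℕ} (hσ : σ ∈ Xbar)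
    (h : phi i σ = phi j τ) : σ ∈ gluingComplex := by
  refine mem_gluingComplex_iff.2 ⟨hσ, fun v hv hv' => ?_⟩
  have hmem : glueVertex i v ∈ phi j τ := h ▸ Finset.mem_image_of_mem _ hv
  obtain ⟨w, -, hw⟩ := Finset.mem_image.1 hmem
  unfold glueVertex at hw
  rw [if_pos hv'] at hw
  split_ifs at hw
  simp_all

theorem C_succ (N : ℕ) : C (N + 1) = C N ∪ Xbar.image (phi (N + 1)) := by
  ext σ
  simp only [C, Finset.mem_biUnion, Finset.mem_union, Finset.mem_Icc]
  constructor
  · rintro ⟨i, ⟨h₁, h₂⟩, h⟩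
    obtain rfl | hi := eq_or_ne i (N + 1)
    · exact .inr h
    · exact .inl ⟨i, ⟨h₁, by omega⟩, h⟩
  · rintro (⟨i, ⟨h₁, h₂⟩, h⟩ | h)
    · exact ⟨i, ⟨h₁, by omega⟩, h⟩
    · exact ⟨N + 1, ⟨by omega, le_rfl⟩, h⟩

theorem C_inter_image_phi {N : ℕ} (hN : 1 ≤ N) :
    C N ∩ Xbar.image (phi (N + 1)) = gluingComplex.image (phi (N + 1)) := by
  ext ρ
  simp only [C, Finset.mem_inter, Finset.mem_biUnion, Finset.mem_Icc, Finset.mem_image]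
  constructor
  · rintro ⟨⟨i, ⟨-, hi⟩, τ, -, rfl⟩, σ, hσ, h⟩
    exact ⟨σ, mem_gluingComplex_of_phi_eq (by omega) hσ h, h⟩
  · rintro ⟨σ, hσ, rfl⟩
    have hX := gluingComplex_subset_Xbar hσ
    exact ⟨⟨1, ⟨le_rfl, hN⟩, σ, hX, phi_eq_phi_of_mem_gluingComplex hσ _ _⟩, σ, hX, rfl⟩

theorem C_constructible {N : ℕ} (hN : 1 ≤ N) : Constructible (C N) 3 := by
  have hX : ∀ i, Constructible (Xbar.image (phi i)) 3 := fun i =>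
    Xbar_constructible.image (glueVertex_injective i)
  induction N, hN using Nat.le_induction with
  | base => simpa [C] using hX 1
  | succ N hN ih =>
    rw [C_succ]
    refine .union ih (hX _) ?_
    rw [C_inter_image_phi hN]
    exact gluingComplex_constructible.image (glueVertex_injective _)

/-- The simplicial complex `C_3`, obtained by gluing 3 disjoint copies of `X̄` along `A`,
is constructible (of dimension 3). -/
theorem C3_constructible : Constructible (C 3) 3 :=
  C_constructible (by norm_num)
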